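/- arXiv:math/9810132 — 8 statements merged into one kernel-verified Lean document; each statement's English description precedes it below -/
import Mathlib

section
/- Let E be a finite-dimensional real normed vector space and Ψ : E → E a C^∞ map. Define a multiplication on C^∞ vector fields X, Y : E → E by (X∘Y)(p) := D²Ψ(p)(X(p), Y(p)), where D²Ψ(p) is the second Fréchet derivative of Ψ at p (a symmetric bilinear map E × E → E). Assume that for every p ∈ E the bilinear map D²Ψ(p) is associative, i.e. D²Ψ(p)(D²Ψ(p)(u,v), w) = D²Ψ(p)(u, D²Ψ(p)(v,w)) for all u,v,w ∈ E. Then for all C^∞ vector fields X, Y, Z, W : E → E the F-manifold identity holds: [X∘Y, Z∘W] − [X∘Y,Z]∘W − Z∘[X∘Y,W] − X∘[Y,Z∘W] + X∘[Y,Z]∘W + X∘Z∘[Y,W] − Y∘[X,Z∘W] + Y∘[X,Z]∘W + Y∘Z∘[X,W] = 0. (This is Theorem 2a of the paper in flat coordinates: on a Frobenius manifold the structure tensor A_{ab}{}^c = ∂_a∂_b∂^cΦ is the second derivative of the vector-valued potential Ψ^c = ∂^cΦ, and associativity of ∘ is the WDVV condition; the conclusion says every Frobenius manifold is an F-manifold.)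 -/
/-!
The failure `P_X(Z, W) = [X, Z ∘ W] - [X, Z] ∘ W - Z ∘ [X, W]` of `[X, ·]` to be a derivation of
the product is a tensor in `Z` and `W`: writing `A = D²Ψ`, it equals `DA(X, Z, W) + δ(DX)(Z, W)`,
where `δL(z, w) = z L(w) - L(z w) + L(z) w` is the Hochschild coboundary for the product at the
given point. The F-manifold identity says `P_{X ∘ Y} = X ∘ P_Y + Y ∘ P_X`. Since
`D(X ∘ Y) = DA(·, X, Y) + Y ∘ DX + X ∘ DY` and `δ` is linear over the product, the first
derivatives of the vector fields cancel, leaving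
`DA(x y, z, w) + δ(DA(·, x, y))(z, w) = x DA(y, z, w) + y DA(x, z, w)`.
As `DA = D³Ψ` is totally symmetric, this is the sum of two instances of the derivative of the
associativity law.
-/

open VectorField

/-- The multiplication of vector fields induced by the second Fréchet derivative of a
vector-valued potential `Ψ`: `(X∘Y)(p) = D²Ψ(p)(X(p), Y(p))`. -/
noncomputable def potMul {E : Type*} [NormedAddCommGroup E] [NormedSpace ℝ E]
    (Ψ : E → E) (X Y : E → E) : E → E :=
  fun p => fderiv ℝ (fderiv ℝ Ψ) p (X p) (Y p)

open Filter Topology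

section

variable {𝕜 E : Type*} [NontriviallyNormedField 𝕜] [NormedAddCommGroup E] [NormedSpace 𝕜 E]

/-- A bilinear map regarded as a product on `E` that is commutative and associative, the algebraic
structure carried by each tangent space of a Frobenius manifold (no unit is required). -/
structure IsCommAssocMul (a : E →L[𝕜] E →L[𝕜] E) : Prop where
  comm : ∀ u v, a u v = a v u
  assoc : ∀ u v w, a (a u v) w = a u (a v w)

lemma IsCommAssocMul.left_comm {a : E →L[𝕜] E →L[𝕜] E} (ha : IsCommAssocMul a) (u v w : E) :
    a u (a v w) = a v (a u w) := by
  rw [← ha.assoc, ha.comm u v, ha.assoc]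

/-- The Hochschild coboundary of the linear map `L` for the product `a`; it vanishes exactly when
`L` is a derivation of `a`. -/
def mulCoboundary (a : E →L[𝕜] E →L[𝕜] E) (L : E →L[𝕜] E) (z w : E) : E :=
  a z (L w) - L (a z w) + a (L z) w

lemma mulCoboundary_add (a : E →L[𝕜] E →L[𝕜] E) (L M : E →L[𝕜] E) (z w : E) :
    mulCoboundary a (L + M) z w = mulCoboundary a L z w + mulCoboundary a M z w := by
  simp only [mulCoboundary, add_apply, map_add]
  abel

lemma IsCommAssocMul.mulCoboundary_mul_comp {a : E →L[𝕜] E →L[𝕜] E} (ha : IsCommAssocMul a)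
    (L : E →L[𝕜] E) (x z w : E) :
    mulCoboundary a (a x ∘L L) z w = a x (mulCoboundary a L z w) := by
  simp only [mulCoboundary, ContinuousLinearMap.comp_apply, map_add, map_sub, ha.assoc,
    ha.left_comm z x]

/-- The product `X ∘ Y` of vector fields given by a bilinear product `A p` at each point `p`. -/
def fieldMul (A : E → E →L[𝕜] E →L[𝕜] E) (X Y : E → E) : E → E :=
  fun p => A p (X p) (Y p)

variable {A : E → E →L[𝕜] E →L[𝕜] E} {X Y Z W : E → E} {p : E}

lemma hasFDerivAt_fieldMul (hA : DifferentiableAt 𝕜 A p) (hX : DifferentiableAt 𝕜 X p)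
    (hY : DifferentiableAt 𝕜 Y p) :
    HasFDerivAt (fieldMul A X Y)
      (A p (X p) ∘L fderiv 𝕜 Y p +
        (A p ∘L fderiv 𝕜 X p + (fderiv 𝕜 A p).flip (X p)).flip (Y p)) p :=
  (hA.hasFDerivAt.clm_apply hX.hasFDerivAt).clm_apply hY.hasFDerivAt

lemma fderiv_fieldMul_apply (hA : DifferentiableAt 𝕜 A p) (hX : DifferentiableAt 𝕜 X p)
    (hY : DifferentiableAt 𝕜 Y p) (t : E) :
    fderiv 𝕜 (fieldMul A X Y) p t =
      fderiv 𝕜 A p t (X p) (Y p) + A p (fderiv 𝕜 X p t) (Y p) + A p (X p) (fderiv 𝕜 Y p t) := by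
  simp only [(hasFDerivAt_fieldMul hA hX hY).fderiv, add_apply, ContinuousLinearMap.comp_apply,
    ContinuousLinearMap.flip_apply]
  abel

lemma fderiv_fieldMul_of_comm (hA : DifferentiableAt 𝕜 A p) (hX : DifferentiableAt 𝕜 X p)
    (hY : DifferentiableAt 𝕜 Y p) (hcomm : ∀ u v, A p u v = A p v u) :
    fderiv 𝕜 (fieldMul A X Y) p =
      ((fderiv 𝕜 A p).flip (X p)).flip (Y p) + A p (Y p) ∘L fderiv 𝕜 X p +
        A p (X p) ∘L fderiv 𝕜 Y p := by
  ext t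
  simp only [fderiv_fieldMul_apply hA hX hY, hcomm _ (Y p), add_apply,
    ContinuousLinearMap.comp_apply, ContinuousLinearMap.flip_apply]

lemma fderiv_mul_comm (hA : DifferentiableAt 𝕜 A p)
    (hcomm : ∀ᶠ q in 𝓝 p, ∀ u v, A q u v = A q v u) (t u v : E) :
    fderiv 𝕜 A p t u v = fderiv 𝕜 A p t v u := by
  have hfields : fieldMul A (fun _ => u) (fun _ => v) =ᶠ[𝓝 p]
      fieldMul A (fun _ => v) (fun _ => u) := hcomm.mono fun _ hq => hq u v
  simpa [fderiv_fieldMul_apply hA] using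
    DFunLike.congr_fun (hfields.fderiv_eq (𝕜 := 𝕜)) t

lemma fderiv_mul_assoc (hA : DifferentiableAt 𝕜 A p)
    (hassoc : ∀ᶠ q in 𝓝 p, ∀ u v w, A q (A q u v) w = A q u (A q v w)) (t u v w : E) :
    fderiv 𝕜 A p t (A p u v) w + A p (fderiv 𝕜 A p t u v) w =
      fderiv 𝕜 A p t u (A p v w) + A p u (fderiv 𝕜 A p t v w) := by
  have hfields : fieldMul A (fieldMul A (fun _ => u) (fun _ => v)) (fun _ => w) =ᶠ[𝓝 p]
      fieldMul A (fun _ => u) (fieldMul A (fun _ => v) (fun _ => w)) :=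
    hassoc.mono fun _ hq => hq u v w
  have hconst (b c : E) : DifferentiableAt 𝕜 (fieldMul A (fun _ => b) (fun _ => c)) p :=
    (hasFDerivAt_fieldMul hA (differentiableAt_const b) (differentiableAt_const c)).differentiableAt
  simpa [fderiv_fieldMul_apply hA, hconst, fieldMul] using
    DFunLike.congr_fun (hfields.fderiv_eq (𝕜 := 𝕜)) t

lemma fderiv_mul_add_mulCoboundary (hA : DifferentiableAt 𝕜 A p)
    (hmul : ∀ᶠ q in 𝓝 p, IsCommAssocMul (A q))
    (hsymm : ∀ t u, fderiv 𝕜 A p t u = fderiv 𝕜 A p u t) (x y z w : E) :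
    fderiv 𝕜 A p (A p x y) z w +
        mulCoboundary (A p) (((fderiv 𝕜 A p).flip x).flip y) z w =
      A p x (fderiv 𝕜 A p y z w) + A p y (fderiv 𝕜 A p x z w) := by
  have hcomm := hmul.self_of_nhds.comm
  have hderiv_comm := fderiv_mul_comm hA (hmul.mono fun _ hq => hq.comm)
  have hderiv_assoc := fderiv_mul_assoc hA (hmul.mono fun _ hq => hq.assoc)
  have hassoc_zxyw : fderiv 𝕜 A p (A p x y) z w + A p (fderiv 𝕜 A p z x y) w =
      fderiv 𝕜 A p x (A p y w) z + A p x (fderiv 𝕜 A p y z w) := by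
    rw [hsymm (A p x y) z, hderiv_assoc z x y w, hsymm z x, hderiv_comm x z, hsymm z y]
  have hassoc_xywz : fderiv 𝕜 A p x (A p y w) z + A p z (fderiv 𝕜 A p w x y) =
      fderiv 𝕜 A p (A p z w) x y + A p y (fderiv 𝕜 A p x z w) := by
    rw [hcomm z (fderiv 𝕜 A p w x y), hsymm w x, hderiv_comm x w y, hsymm (A p z w) x,
      hderiv_comm x (A p z w) y, hcomm z w, hderiv_comm x z w, hderiv_assoc]
  simp only [mulCoboundary, ContinuousLinearMap.flip_apply]
  linear_combination (norm := module) hassoc_zxyw + hassoc_xywz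

/-- The failure of `[X, ·]` to satisfy the Leibniz rule on the product `Z ∘ W`, denoted
`P_X(Z, W)` by Hertling and Manin. -/
noncomputable def leibnizDefect (A : E → E →L[𝕜] E →L[𝕜] E) (X Z W : E → E) : E → E :=
  lieBracket 𝕜 X (fieldMul A Z W) - fieldMul A (lieBracket 𝕜 X Z) W
    - fieldMul A Z (lieBracket 𝕜 X W)

lemma leibnizDefect_apply (hA : DifferentiableAt 𝕜 A p) (hZ : DifferentiableAt 𝕜 Z p)
    (hW : DifferentiableAt 𝕜 W p) :
    leibnizDefect A X Z W p =
      fderiv 𝕜 A p (X p) (Z p) (W p) + mulCoboundary (A p) (fderiv 𝕜 X p) (Z p) (W p) := by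
  simp only [leibnizDefect, Pi.sub_apply, lieBracket, fderiv_fieldMul_apply hA hZ hW]
  simp only [fieldMul, lieBracket, mulCoboundary, map_sub, sub_apply]
  abel

theorem leibnizDefect_fieldMul (hA : DifferentiableAt 𝕜 A p)
    (hmul : ∀ᶠ q in 𝓝 p, IsCommAssocMul (A q))
    (hsymm : ∀ t u, fderiv 𝕜 A p t u = fderiv 𝕜 A p u t)
    (hX : DifferentiableAt 𝕜 X p) (hY : DifferentiableAt 𝕜 Y p)
    (hZ : DifferentiableAt 𝕜 Z p) (hW : DifferentiableAt 𝕜 W p) :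
    leibnizDefect A (fieldMul A X Y) Z W p =
      fieldMul A X (leibnizDefect A Y Z W) p + fieldMul A Y (leibnizDefect A X Z W) p := by
  have ha := hmul.self_of_nhds
  have hcore := fderiv_mul_add_mulCoboundary hA hmul hsymm (X p) (Y p) (Z p) (W p)
  rw [leibnizDefect_apply hA hZ hW, fderiv_fieldMul_of_comm hA hX hY ha.comm, mulCoboundary_add,
    mulCoboundary_add, ha.mulCoboundary_mul_comp, ha.mulCoboundary_mul_comp]
  simp only [fieldMul, leibnizDefect_apply hA hZ hW, map_add]
  linear_combination (norm := module) hcore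

variable {Ψ : E → E}

lemma differentiableAt_fderiv_fderiv (hΨ : ContDiffAt 𝕜 3 Ψ p) :
    DifferentiableAt 𝕜 (fderiv 𝕜 (fderiv 𝕜 Ψ)) p :=
  have h_fderiv : ContDiffAt 𝕜 2 (fderiv 𝕜 Ψ) p := hΨ.fderiv_right (by norm_num)
  (h_fderiv.fderiv_right (m := 1) (by norm_num)).differentiableAt_one

lemma eventually_isSymmSndFDerivAt {n : WithTop ℕ∞} (hΨ : ContDiffAt 𝕜 n Ψ p)
    (hn : minSmoothness 𝕜 2 ≤ n) : ∀ᶠ q in 𝓝 p, IsSymmSndFDerivAt 𝕜 Ψ q := by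
  obtain ⟨m, hm, hmn, hm_ne⟩ := exist_minSmoothness_le_ne_infty hn
  exact ((hΨ.of_le hmn).eventually hm_ne).mono fun _ hq => hq.isSymmSndFDerivAt hm

variable (𝕜) in
/-- The analogue of `potMul` over an arbitrary normed field `𝕜`, for instance for holomorphic
Frobenius manifolds. -/
noncomputable def potentialMul (Ψ X Y : E → E) : E → E :=
  fieldMul (fderiv 𝕜 (fderiv 𝕜 Ψ)) X Y

theorem frobenius_is_F_manifold_general (hΨ : ContDiffAt 𝕜 (minSmoothness 𝕜 3) Ψ p)
    (hassoc : ∀ᶠ q in 𝓝 p, ∀ u v w : E,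
      fderiv 𝕜 (fderiv 𝕜 Ψ) q (fderiv 𝕜 (fderiv 𝕜 Ψ) q u v) w =
      fderiv 𝕜 (fderiv 𝕜 Ψ) q u (fderiv 𝕜 (fderiv 𝕜 Ψ) q v w))
    (hX : DifferentiableAt 𝕜 X p) (hY : DifferentiableAt 𝕜 Y p)
    (hZ : DifferentiableAt 𝕜 Z p) (hW : DifferentiableAt 𝕜 W p) :
    (lieBracket 𝕜 (potentialMul 𝕜 Ψ X Y) (potentialMul 𝕜 Ψ Z W)
      - potentialMul 𝕜 Ψ (lieBracket 𝕜 (potentialMul 𝕜 Ψ X Y) Z) W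
      - potentialMul 𝕜 Ψ Z (lieBracket 𝕜 (potentialMul 𝕜 Ψ X Y) W)
      - potentialMul 𝕜 Ψ X (lieBracket 𝕜 Y (potentialMul 𝕜 Ψ Z W))
      + potentialMul 𝕜 Ψ X (potentialMul 𝕜 Ψ (lieBracket 𝕜 Y Z) W)
      + potentialMul 𝕜 Ψ X (potentialMul 𝕜 Ψ Z (lieBracket 𝕜 Y W))
      - potentialMul 𝕜 Ψ Y (lieBracket 𝕜 X (potentialMul 𝕜 Ψ Z W))
      + potentialMul 𝕜 Ψ Y (potentialMul 𝕜 Ψ (lieBracket 𝕜 X Z) W)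
      + potentialMul 𝕜 Ψ Y (potentialMul 𝕜 Ψ Z (lieBracket 𝕜 X W))) p = 0 := by
  have hmul : ∀ᶠ q in 𝓝 p, IsCommAssocMul (fderiv 𝕜 (fderiv 𝕜 Ψ) q) :=
    ((eventually_isSymmSndFDerivAt hΨ (minSmoothness_monotone (by norm_num))).and hassoc).mono
      fun _ hq => ⟨hq.1, hq.2⟩
  have hsymm : IsSymmSndFDerivAt 𝕜 (fderiv 𝕜 Ψ) p :=
    (hΨ.fderiv_right (m := minSmoothness 𝕜 2)
      (by rw [← minSmoothness_add]; norm_num)).isSymmSndFDerivAt le_rfl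
  have hdiff := differentiableAt_fderiv_fderiv (hΨ.of_le le_minSmoothness)
  have hleibniz := leibnizDefect_fieldMul hdiff hmul hsymm hX hY hZ hW
  simp only [leibnizDefect, fieldMul, Pi.sub_apply, map_sub] at hleibniz
  simp only [potentialMul, fieldMul, Pi.add_apply, Pi.sub_apply]
  linear_combination (norm := module) hleibniz

end

/-- Theorem 2a in flat coordinates: if `Ψ : E → E` is `C^∞` and the bilinear map
`D²Ψ(p)` is associative for every `p` (the WDVV condition), then the nine-term
F-manifold identity (1) holds for all `C^∞` vector fields. -/
theorem frobenius_is_F_manifold {E : Type*} [NormedAddCommGroup E] [NormedSpace ℝ E]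
    [FiniteDimensional ℝ E]
    (Ψ : E → E) (hΨ : ContDiff ℝ (⊤ : ℕ∞) Ψ)
    (hassoc : ∀ p u v w : E,
      fderiv ℝ (fderiv ℝ Ψ) p (fderiv ℝ (fderiv ℝ Ψ) p u v) w =
      fderiv ℝ (fderiv ℝ Ψ) p u (fderiv ℝ (fderiv ℝ Ψ) p v w))
    (X Y Z W : E → E)
    (hX : ContDiff ℝ (⊤ : ℕ∞) X) (hY : ContDiff ℝ (⊤ : ℕ∞) Y)
    (hZ : ContDiff ℝ (⊤ : ℕ∞) Z) (hW : ContDiff ℝ (⊤ : ℕ∞) W) :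
    lieBracket ℝ (potMul Ψ X Y) (potMul Ψ Z W)
      - potMul Ψ (lieBracket ℝ (potMul Ψ X Y) Z) W
      - potMul Ψ Z (lieBracket ℝ (potMul Ψ X Y) W)
      - potMul Ψ X (lieBracket ℝ Y (potMul Ψ Z W))
      + potMul Ψ X (potMul Ψ (lieBracket ℝ Y Z) W)
      + potMul Ψ X (potMul Ψ Z (lieBracket ℝ Y W))
      - potMul Ψ Y (lieBracket ℝ X (potMul Ψ Z W))
      + potMul Ψ Y (potMul Ψ (lieBracket ℝ X Z) W)
      + potMul Ψ Y (potMul Ψ Z (lieBracket ℝ X W)) = 0 :=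
  funext fun p => frobenius_is_F_manifold_general
    (by simpa using (contDiff_infty.1 hΨ 3).contDiffAt)
    (.of_forall hassoc) (hX.differentiable (by simp) p) (hY.differentiable (by simp) p)
    (hZ.differentiable (by simp) p) (hW.differentiable (by simp) p)
end

section
/- Let (A, ∘, [·,·]) be an F-algebra with an identity element e for ∘, over a commutative ring R (e.g. a real vector space). Let d0 ∈ R and let E ∈ A satisfy P_E(Z,W) = d0 • (Z∘W) for all Z, W ∈ A (E is an Euler field of weight d0). Write E^{∘k} for the k-th ∘-power of E, with E^{∘0} := e. Then for all natural numbers m, n with m + n ≥ 1: [E^{∘n}, E^{∘m}] = ((m : ℤ) − (n : ℤ)) • (d0 • E^{∘(m+n−1)}). (Theorem 6: the powers of an Euler field generate a half of the Virasoro algebra on an arbitrary, not necessarily semisimple, Frobenius manifold.) -/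
/-!
If `P_X(Z,W) = c∘Z∘W`, then `D_X := [X,·] + c∘·` is a derivation of `∘`, so the bracket of `X` with
a power `Z^n` is determined by `[X,Z]`. By the F-identity the factor `c` obeys the Leibniz rule in
`X`; hence `E^n` has factor `n E^{n-1}∘c` when `E` has factor `c`. Now `D_E E = c∘E` gives
`[E,E^n] = (n-1) c∘E^n`, which by skew-symmetry means `D_{E^n} E = c∘E^n`, and so
`[E^n,E^m] = m E^{m-1}∘c∘E^n - n E^{n-1}∘c∘E^m = (m-n) c∘E^{m+n-1}`.
-/

/-- The deviation `P_X(Z,W) = [X, Z∘W] − [X,Z]∘W − Z∘[X,W]` of the structure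
`(A, ∘, [·,·])` from being a Poisson algebra. -/
def Pdev {R A : Type*} [CommRing R] [AddCommGroup A] [Module R A]
    (mul brk : A →ₗ[R] A →ₗ[R] A) (X Z W : A) : A :=
  brk X (mul Z W) - mul (brk X Z) W - mul Z (brk X W)

-- The factor `m` makes up for the junk value `0 - 1 = 0` of the exponent.
lemma natCast_mul_pow_pred_mul_pow {A : Type*} [CommSemiring A] (X : A) {m n k : ℕ}
    (h : m + n = k + 1) : (m : A) * (X ^ (m - 1) * X ^ n) = m * X ^ k := by
  rcases m with _ | m
  · simp only [Nat.cast_zero, zero_mul]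
  · rw [← pow_add, show m + 1 - 1 + n = k by omega]

section CommutativeAlgebra

variable {R A : Type*} [CommRing R] [CommRing A] [Algebra R A] {brk : A →ₗ[R] A →ₗ[R] A}

/-- `X` has conformal factor `c` if `P_X(Z,W) = c∘Z∘W`. An Euler field of weight `d0` is an element
with conformal factor `d0 • 1`; factors in `A` are allowed so that the powers of an Euler field
have one as well. -/
def HasConformalFactor (brk : A →ₗ[R] A →ₗ[R] A) (X c : A) : Prop :=
  ∀ Z W, Pdev (LinearMap.mul R A) brk X Z W = c * (Z * W)

/-- The F-identity `P_{X∘Y} = X∘P_Y + Y∘P_X`, which makes `A` an F-algebra when `brk` is a Lie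
bracket. -/
def SatisfiesFIdentity (brk : A →ₗ[R] A →ₗ[R] A) : Prop :=
  ∀ X Y Z W, Pdev (LinearMap.mul R A) brk (X * Y) Z W =
    X * Pdev (LinearMap.mul R A) brk Y Z W + Y * Pdev (LinearMap.mul R A) brk X Z W

namespace HasConformalFactor

variable {X Y E c d : A}

/-- The derivation `[X,·] + c∘·` of `∘` attached to an element `X` with conformal factor `c`. -/
def toDerivation (hX : HasConformalFactor brk X c) : Derivation R A A :=
  Derivation.mk' (brk X + LinearMap.mulLeft R c) fun Z W ↦ by
    have hZW : brk X (Z * W) - brk X Z * W - Z * brk X W = c * (Z * W) := hX Z W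
    simp only [LinearMap.add_apply, LinearMap.mulLeft_apply, smul_eq_mul]
    linear_combination hZW

lemma toDerivation_apply (hX : HasConformalFactor brk X c) (Z : A) :
    hX.toDerivation Z = brk X Z + c * Z := rfl

lemma bracket_pow (hX : HasConformalFactor brk X c) (Z : A) (n : ℕ) :
    brk X (Z ^ n) = n * (Z ^ (n - 1) * (brk X Z + c * Z)) - c * Z ^ n := by
  have hD := hX.toDerivation.leibniz_pow Z n
  rw [toDerivation_apply, toDerivation_apply, nsmul_eq_mul, smul_eq_mul] at hD
  exact eq_sub_of_add_eq hD

lemma bracket_pow_self (hE : HasConformalFactor brk E c) (halt : brk.IsAlt) (n : ℕ) :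
    brk E (E ^ n) = (n - 1) * (c * E ^ n) := by
  have hpow := natCast_mul_pow_pred_mul_pow E (m := n) (n := 1) rfl
  rw [hE.bracket_pow, halt.self_eq_zero]
  linear_combination c * hpow

lemma one (hF : SatisfiesFIdentity brk) : HasConformalFactor brk 1 0 := fun Z W ↦ by
  have h := hF 1 1 Z W
  rw [mul_one] at h
  linear_combination -h

lemma mul (hX : HasConformalFactor brk X c) (hF : SatisfiesFIdentity brk)
    (hY : HasConformalFactor brk Y d) :
    HasConformalFactor brk (X * Y) (X * d + Y * c) := fun Z W ↦ by
  rw [hF, hX, hY]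
  ring

lemma pow (hX : HasConformalFactor brk X c) (hF : SatisfiesFIdentity brk) (n : ℕ) :
    HasConformalFactor brk (X ^ n) (n * (X ^ (n - 1) * c)) := by
  induction n with
  | zero => simpa only [pow_zero, Nat.cast_zero, zero_mul] using one hF
  | succ n ih =>
    have hpow := natCast_mul_pow_pred_mul_pow X (m := n) (n := 1) rfl
    rw [pow_succ]
    convert ih.mul hF hX using 1
    rw [Nat.add_sub_cancel]
    push_cast
    linear_combination -c * hpow

lemma pow_toDerivation_apply_self (hE : HasConformalFactor brk E c) (hF : SatisfiesFIdentity brk)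
    (halt : brk.IsAlt) (n : ℕ) :
    (hE.pow hF n).toDerivation E = c * E ^ n := by
  have hpow := natCast_mul_pow_pred_mul_pow E (m := n) (n := 1) rfl
  rw [toDerivation_apply, ← halt.neg, hE.bracket_pow_self halt]
  linear_combination c * hpow

theorem bracket_pow_pow (hE : HasConformalFactor brk E c) (hF : SatisfiesFIdentity brk)
    (halt : brk.IsAlt) {m n k : ℕ} (hk : m + n = k + 1) :
    brk (E ^ n) (E ^ m) = ((m : ℤ) - (n : ℤ)) • (c * E ^ k) := by
  have hm := natCast_mul_pow_pred_mul_pow E hk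
  have hn := natCast_mul_pow_pred_mul_pow E ((add_comm n m).trans hk)
  rw [(hE.pow hF n).bracket_pow, ← toDerivation_apply (hE.pow hF n),
    hE.pow_toDerivation_apply_self hF halt, zsmul_eq_mul]
  push_cast
  linear_combination c * hm - c * hn

end HasConformalFactor

end CommutativeAlgebra

section Unbundled

variable {R A : Type*} [CommRing R] [AddCommGroup A] [Module R A]

/-- The commutative ring on the additive group `A` whose product is the bilinear map `mul`, used to
pass from a product given as a map to Mathlib's algebra classes. -/
abbrev commRingOfBilinear (mul : A →ₗ[R] A →ₗ[R] A)
    (hcomm : ∀ x y : A, mul x y = mul y x)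
    (hassoc : ∀ x y z : A, mul (mul x y) z = mul x (mul y z))
    (e : A) (he : ∀ x : A, mul e x = x) : CommRing A where
  __ := ‹AddCommGroup A›
  mul x y := mul x y
  one := e
  mul_assoc := hassoc
  mul_comm := hcomm
  one_mul := he
  mul_one x := (hcomm x e).trans (he x)
  left_distrib x := map_add (mul x)
  right_distrib := mul.map_add₂
  zero_mul := mul.map_zero₂
  mul_zero x := map_zero (mul x)

theorem euler_powers_virasoro_general
    (mul brk : A →ₗ[R] A →ₗ[R] A)
    (hcomm : ∀ x y : A, mul x y = mul y x)
    (hassoc : ∀ x y z : A, mul (mul x y) z = mul x (mul y z))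
    (halt : ∀ x : A, brk x x = 0)
    (hF : ∀ x y z w : A,
      Pdev mul brk (mul x y) z w = mul x (Pdev mul brk y z w) + mul y (Pdev mul brk x z w))
    (e : A) (he : ∀ x : A, mul e x = x)
    (c E : A) (hE : ∀ Z W : A, Pdev mul brk E Z W = mul c (mul Z W))
    (pow : ℕ → A) (hpow0 : pow 0 = e) (hpowS : ∀ k : ℕ, pow (k + 1) = mul E (pow k))
    (m n : ℕ) (hmn : 1 ≤ m + n) :
    brk (pow n) (pow m) = ((m : ℤ) - (n : ℤ)) • mul c (pow (m + n - 1)) := by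
  let _ : CommRing A := commRingOfBilinear mul hcomm hassoc e he
  let _ : Algebra R A := Algebra.ofModule mul.map_smul₂ fun r x y ↦ map_smul (mul x) r y
  have hpow (k : ℕ) : pow k = E ^ k := by
    induction k with
    | zero => rw [hpow0, pow_zero]; rfl
    | succ k ih => rw [hpowS, ih, pow_succ']; rfl
  have hfactor : HasConformalFactor brk E c := hE
  simp only [hpow]
  exact hfactor.bracket_pow_pow hF halt (Nat.sub_add_cancel hmn).symm

end Unbundled

/-- Theorem 6: on an F-algebra with identity `e`, the ∘-powers of an Euler field `E`
of weight `d0` satisfy `[E^{∘n}, E^{∘m}] = (m − n) • (d0 • E^{∘(m+n−1)})`. -/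
theorem euler_powers_virasoro {R A : Type*} [CommRing R] [AddCommGroup A] [Module R A]
    (mul brk : A →ₗ[R] A →ₗ[R] A)
    (hcomm : ∀ x y : A, mul x y = mul y x)
    (hassoc : ∀ x y z : A, mul (mul x y) z = mul x (mul y z))
    (halt : ∀ x : A, brk x x = 0)
    (hjac : ∀ x y z : A, brk x (brk y z) + brk y (brk z x) + brk z (brk x y) = 0)
    (hF : ∀ x y z w : A,
      Pdev mul brk (mul x y) z w = mul x (Pdev mul brk y z w) + mul y (Pdev mul brk x z w))
    (e : A) (he : ∀ x : A, mul e x = x)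
    (d0 : R) (E : A)
    (hE : ∀ Z W : A, Pdev mul brk E Z W = d0 • mul Z W)
    (pow : ℕ → A) (hpow0 : pow 0 = e) (hpowS : ∀ k : ℕ, pow (k + 1) = mul E (pow k)) :
    ∀ m n : ℕ, 1 ≤ m + n →
      brk (pow n) (pow m) = ((m : ℤ) - (n : ℤ)) • (d0 • pow (m + n - 1)) := by
  have hmul (x : A) : mul (d0 • e) x = d0 • x := by rw [mul.map_smul₂, he]
  simpa only [hmul] using euler_powers_virasoro_general mul brk hcomm hassoc halt hF e he (d0 • e)
    E (by simpa only [hmul] using hE) pow hpow0 hpowS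
end

section
/- Let A be a module over a commutative ring R equipped with an R-bilinear multiplication ∘ : A × A → A and a bracket [·,·] : A × A → A which is R-bilinear, alternating and satisfies the Jacobi identity. Let d1, d2 ∈ R and let E1, E2 ∈ A satisfy P_{E1}(Z,W) = d1 • (Z∘W) and P_{E2}(Z,W) = d2 • (Z∘W) for all Z, W ∈ A (i.e. E1, E2 are weak Euler fields of weights d1, d2). Then P_{[E1,E2]}(Z,W) = 0 for all Z, W ∈ A, i.e. the commutator of any two weak Euler fields is a weak Euler field of weight zero. (Proposition 4.3.) -/
theorem lie_lie_eq_zero_of_lie_eq_smul {R L M : Type*} [CommRing R] [LieRing L] [LieAlgebra R L]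
    [AddCommGroup M] [Module R M] [LieRingModule L M] [LieModule R L M]
    {x y : L} {m : M} {a b : R} (hx : ⁅x, m⁆ = a • m) (hy : ⁅y, m⁆ = b • m) :
    ⁅⁅x, y⁆, m⁆ = 0 := by
  rw [lie_lie, hx, hy, lie_smul, lie_smul, hx, hy, smul_comm, sub_self]

section

attribute [local instance] LieRing.ofAssociativeRing

variable {R A : Type*} [CommRing R] [AddCommGroup A] [Module R A]

theorem leibniz_of_isAlt_of_jacobi {brk : A →ₗ[R] A →ₗ[R] A} (halt : brk.IsAlt)
    (hjac : ∀ x y z : A, brk x (brk y z) + brk y (brk z x) + brk z (brk x y) = 0) (x y z : A) :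
    brk x (brk y z) = brk (brk x y) z + brk y (brk x z) := by
  have h := hjac x y z
  rw [← halt.neg x z, ← halt.neg (brk x y) z, map_neg] at h
  rw [← sub_eq_zero, ← h]
  abel

-- With values in `Module.End R A` rather than `A →ₗ[R] A`, `brk X` acts on `mul` through the Lie
-- module structure of `LinearMap.instLieRingModule`.
theorem Pdev_eq_lie (mul : A →ₗ[R] A →ₗ[R] A) (brk : A →ₗ[R] Module.End R A) (X Z W : A) :
    Pdev mul brk X Z W = ⁅brk X, mul⁆ Z W := by
  simp only [Pdev, LieHom.lie_apply, LinearMap.sub_apply, Module.End.lie_apply]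
  exact sub_right_comm _ _ _

theorem forall_Pdev_eq_smul_iff {mul : A →ₗ[R] A →ₗ[R] A}
    {brk : A →ₗ[R] Module.End R A} {X : A} {d : R} :
    (∀ Z W : A, Pdev mul brk X Z W = d • mul Z W) ↔
      ⁅brk X, mul⁆ = d • mul := by
  simp only [Pdev_eq_lie, LinearMap.ext_iff, LinearMap.smul_apply]

theorem bracket_of_euler_fields_is_euler_weight_zero_general
    (mul : A →ₗ[R] A →ₗ[R] A) (brk : A →ₗ[R] Module.End R A)
    (hleib : ∀ x y z : A, brk x (brk y z) = brk (brk x y) z + brk y (brk x z))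
    (d1 d2 : R) (E1 E2 : A)
    (hE1 : ∀ Z W : A, Pdev mul brk E1 Z W = d1 • mul Z W)
    (hE2 : ∀ Z W : A, Pdev mul brk E2 Z W = d2 • mul Z W) (Z W : A) :
    Pdev mul brk (brk E1 E2) Z W = 0 := by
  have had : brk (brk E1 E2) = ⁅brk E1, brk E2⁆ :=
    LinearMap.ext fun z => eq_sub_of_add_eq (hleib E1 E2 z).symm
  have hkill : ⁅⁅brk E1, brk E2⁆, mul⁆ = 0 :=
    lie_lie_eq_zero_of_lie_eq_smul (forall_Pdev_eq_smul_iff.mp hE1)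
      (forall_Pdev_eq_smul_iff.mp hE2)
  rw [Pdev_eq_lie, had, hkill, LinearMap.zero_apply, LinearMap.zero_apply]

end

/-- Proposition 4.3: the commutator of two weak Euler fields (of weights `d1`, `d2`)
is a weak Euler field of weight zero. -/
theorem bracket_of_euler_fields_is_euler_weight_zero
    {R A : Type*} [CommRing R] [AddCommGroup A] [Module R A]
    (mul brk : A →ₗ[R] A →ₗ[R] A)
    (halt : ∀ x : A, brk x x = 0)
    (hjac : ∀ x y z : A, brk x (brk y z) + brk y (brk z x) + brk z (brk x y) = 0)
    (d1 d2 : R) (E1 E2 : A)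
    (hE1 : ∀ Z W : A, Pdev mul brk E1 Z W = d1 • mul Z W)
    (hE2 : ∀ Z W : A, Pdev mul brk E2 Z W = d2 • mul Z W) :
    ∀ Z W : A, Pdev mul brk (brk E1 E2) Z W = 0 :=
  bracket_of_euler_fields_is_euler_weight_zero_general mul brk
    (leibniz_of_isAlt_of_jacobi halt hjac) d1 d2 E1 E2 hE1 hE2
end

section
/- Let (A, ∘, [·,·]) be an F-algebra over a commutative ring R, and let B := {X ∈ A | P_X(Z,W) = 0 for all Z, W ∈ A}. Then: (i) if X, Y ∈ B then X∘Y ∈ B; (ii) if X, Y ∈ B then [X,Y] ∈ B; (iii) if ∘ has an identity element e, then e ∈ B. Consequently B is closed under ∘ and [·,·] and forms a Poisson subalgebra of A. (Proposition 5.1a.) -/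
section

variable {R A : Type*} [CommRing R] [AddCommGroup A] [Module R A] {mul brk : A →ₗ[R] A →ₗ[R] A}

attribute [local instance] LieRing.ofAssociativeRing

variable (mul) in
/-- The Lie algebra of derivations of an arbitrary bilinear product `mul`; Mathlib's `Derivation`
is restricted to commutative algebras. -/
def derivationLieSubalgebra : LieSubalgebra R (Module.End R A) where
  carrier := {D | ∀ z w, D (mul z w) = mul (D z) w + mul z (D w)}
  zero_mem' := by simp
  add_mem' {D E} hD hE z w := by
    simp only [LinearMap.add_apply, hD z w, hE z w, map_add]
    abel
  smul_mem' c D hD z w := by simp [hD z w]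
  lie_mem' {D E} hD hE z w := by
    replace hD : ∀ z w, D (mul z w) = mul (D z) w + mul z (D w) := hD
    replace hE : ∀ z w, E (mul z w) = mul (E z) w + mul z (E w) := hE
    -- The mixed terms `D z ∘ E w` and `E z ∘ D w` of `D (E (z ∘ w))` and `E (D (z ∘ w))` cancel.
    simp only [LieRing.of_associative_ring_bracket, LinearMap.sub_apply, Module.End.mul_apply,
      hD, hE, map_add, map_sub]
    abel

theorem mem_derivationLieSubalgebra {D : Module.End R A} :
    D ∈ derivationLieSubalgebra mul ↔ ∀ z w, D (mul z w) = mul (D z) w + mul z (D w) :=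
  Iff.rfl

variable (mul brk) in
/-- The set `B` of the elements `X` with `P_X = 0`, encoded as the preimage of the derivations of
`mul` under `ad`; `mem_poissonSubmodule` is the description by `P_X`. -/
def poissonSubmodule : Submodule R A :=
  (derivationLieSubalgebra mul).toSubmodule.comap brk

theorem mem_poissonSubmodule {X : A} :
    X ∈ poissonSubmodule mul brk ↔ ∀ Z W, Pdev mul brk X Z W = 0 := by
  simp only [poissonSubmodule, Submodule.mem_comap, LieSubalgebra.mem_toSubmodule,
    mem_derivationLieSubalgebra, Pdev, sub_sub, sub_eq_zero]

theorem mul_mem_poissonSubmodule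
    (hF : ∀ x y z w : A,
      Pdev mul brk (mul x y) z w = mul x (Pdev mul brk y z w) + mul y (Pdev mul brk x z w))
    {X Y : A} (hX : X ∈ poissonSubmodule mul brk) (hY : Y ∈ poissonSubmodule mul brk) :
    mul X Y ∈ poissonSubmodule mul brk := by
  rw [mem_poissonSubmodule] at hX hY ⊢
  intro Z W
  rw [hF, hX, hY, map_zero, map_zero, add_zero]

theorem brk_mem_poissonSubmodule
    (hleib : ∀ x y z : A, brk x (brk y z) = brk (brk x y) z + brk y (brk x z))
    {X Y : A} (hX : X ∈ poissonSubmodule mul brk) (hY : Y ∈ poissonSubmodule mul brk) :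
    brk X Y ∈ poissonSubmodule mul brk := by
  have ad_brk : brk (brk X Y) = ⁅brk X, brk Y⁆ :=
    LinearMap.ext fun z => eq_sub_of_add_eq (hleib X Y z).symm
  change brk (brk X Y) ∈ derivationLieSubalgebra mul
  rw [ad_brk]
  exact (derivationLieSubalgebra mul).lie_mem hX hY

theorem mem_poissonSubmodule_of_idempotent
    (hF : ∀ x y z w : A,
      Pdev mul brk (mul x y) z w = mul x (Pdev mul brk y z w) + mul y (Pdev mul brk x z w))
    {e : A} (he : mul e e = e) (hmul : ∀ x, mul e (mul e x) = mul e x) :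
    e ∈ poissonSubmodule mul brk := by
  rw [mem_poissonSubmodule]
  intro Z W
  have hP : Pdev mul brk e Z W = mul e (Pdev mul brk e Z W) + mul e (Pdev mul brk e Z W) := by
    simpa only [he] using hF e e Z W
  have heP : mul e (Pdev mul brk e Z W) = 0 := by
    have h := congrArg (mul e) hP
    rw [map_add, hmul] at h
    exact left_eq_add.mp h
  rw [hP, heP, add_zero]

theorem leibniz_of_alternating_of_jacobi (halt : ∀ x : A, brk x x = 0)
    (hjac : ∀ x y z : A, brk x (brk y z) + brk y (brk z x) + brk z (brk x y) = 0) (x y z : A) :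
    brk x (brk y z) = brk (brk x y) z + brk y (brk x z) := by
  have hskew : ∀ u v, -brk u v = brk v u := LinearMap.IsAlt.neg halt
  have h := hjac x y z
  rw [← hskew x z, ← hskew (brk x y) z, map_neg] at h
  rw [← sub_eq_zero, ← h]
  abel

theorem poisson_subalgebra_general
    (hleib : ∀ x y z : A, brk x (brk y z) = brk (brk x y) z + brk y (brk x z))
    (hF : ∀ x y z w : A,
      Pdev mul brk (mul x y) z w = mul x (Pdev mul brk y z w) + mul y (Pdev mul brk x z w))
    {e : A} (he : mul e e = e) (hmul : ∀ x, mul e (mul e x) = mul e x) :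
    (∀ X Y : A, X ∈ poissonSubmodule mul brk → Y ∈ poissonSubmodule mul brk →
        mul X Y ∈ poissonSubmodule mul brk) ∧
    (∀ X Y : A, X ∈ poissonSubmodule mul brk → Y ∈ poissonSubmodule mul brk →
        brk X Y ∈ poissonSubmodule mul brk) ∧
    e ∈ poissonSubmodule mul brk :=
  ⟨fun _ _ => mul_mem_poissonSubmodule hF, fun _ _ => brk_mem_poissonSubmodule hleib,
    mem_poissonSubmodule_of_idempotent hF he hmul⟩

end

/-- Proposition 5.1a: in an F-algebra, the set `B = {X | P_X ≡ 0}` is closed under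
`∘` and `[·,·]`, and contains the identity `e` of `∘` (hence is a Poisson subalgebra). -/
theorem poisson_subalgebra {R A : Type*} [CommRing R] [AddCommGroup A] [Module R A]
    (mul brk : A →ₗ[R] A →ₗ[R] A)
    (hcomm : ∀ x y : A, mul x y = mul y x)
    (hassoc : ∀ x y z : A, mul (mul x y) z = mul x (mul y z))
    (halt : ∀ x : A, brk x x = 0)
    (hjac : ∀ x y z : A, brk x (brk y z) + brk y (brk z x) + brk z (brk x y) = 0)
    (hF : ∀ x y z w : A,
      Pdev mul brk (mul x y) z w = mul x (Pdev mul brk y z w) + mul y (Pdev mul brk x z w))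
    (e : A) (he : ∀ x : A, mul e x = x) :
    (∀ X Y : A, (∀ Z W : A, Pdev mul brk X Z W = 0) → (∀ Z W : A, Pdev mul brk Y Z W = 0) →
        ∀ Z W : A, Pdev mul brk (mul X Y) Z W = 0) ∧
    (∀ X Y : A, (∀ Z W : A, Pdev mul brk X Z W = 0) → (∀ Z W : A, Pdev mul brk Y Z W = 0) →
        ∀ Z W : A, Pdev mul brk (brk X Y) Z W = 0) ∧
    (∀ Z W : A, Pdev mul brk e Z W = 0) := by
  simpa only [mem_poissonSubmodule] using
    poisson_subalgebra_general (leibniz_of_alternating_of_jacobi halt hjac) hF (he e)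
      fun x => he (mul e x)
end

section
/- Let (A, ∘, [·,·]) be an F-algebra over a commutative ring R, and let u ∈ A be a ∘-idempotent, i.e. u∘u = u. Then P_u(Z,W) = 0 for all Z, W ∈ A. (This is the key step in the proof of Theorem 2b and Corollary 2.1: for a basic idempotent vector field e_i the F-identity gives P_{e_i} = 2 e_i ∘ P_{e_i}, hence P_{e_i} = 0.) -/
/-!
For fixed `Z` and `W` the F-identity is the Leibniz rule for `d X := P_X(Z, W)`, and a map obeying
the Leibniz rule kills idempotents: `d u = d (u∘u) = u∘d u + u∘d u`, and applying the idempotent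
operator `u∘·` once more gives `u∘d u = u∘d u + u∘d u`, so `u∘d u = 0` and `d u = 0`.
-/

theorem eq_zero_of_eq_map_add_map_of_idempotent {M F : Type*} [AddMonoid M] [IsLeftCancelAdd M]
    [FunLike F M M] [AddHomClass F M M] (f : F) (hf : ∀ x, f (f x) = f x) {p : M}
    (hp : p = f p + f p) : p = 0 := by
  have hfp : f p = f p + f p := by
    calc
      f p = f (f p + f p) := congrArg f hp
      _ = f p + f p := by rw [map_add, hf]
  have hfp_zero : f p = 0 := left_eq_add.mp hfp
  rw [hp, hfp_zero, add_zero]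

theorem eq_zero_of_leibniz_of_idempotent {A M F : Type*} [AddMonoid M] [IsLeftCancelAdd M]
    [FunLike F M M] [AddHomClass F M M] {mul : A → A → A} {act : A → F} {d : A → M}
    (hact : ∀ a m, act (mul a a) m = act a (act a m))
    (hd : ∀ a b, d (mul a b) = act a (d b) + act b (d a))
    {u : A} (hu : mul u u = u) : d u = 0 := by
  have hact_idem (m : M) : act u (act u m) = act u m := by rw [← hact, hu]
  have hdu : d u = act u (d u) + act u (d u) := by rw [← hd, hu]
  exact eq_zero_of_eq_map_add_map_of_idempotent (act u) hact_idem hdu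

theorem Pdev_of_idempotent_eq_zero_general {R A : Type*} [CommRing R] [AddCommGroup A] [Module R A]
    (mul brk : A →ₗ[R] A →ₗ[R] A)
    (hleft_alt : ∀ x y : A, mul (mul x x) y = mul x (mul x y))
    (hF : ∀ x y z w : A,
      Pdev mul brk (mul x y) z w = mul x (Pdev mul brk y z w) + mul y (Pdev mul brk x z w))
    (u : A) (hu : mul u u = u) (Z W : A) :
    Pdev mul brk u Z W = 0 :=
  eq_zero_of_leibniz_of_idempotent (d := fun X ↦ Pdev mul brk X Z W) hleft_alt
    (fun x y ↦ hF x y Z W) hu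

/-- In an F-algebra, every ∘-idempotent `u` satisfies `P_u ≡ 0`
(key step in the proof of Theorem 2b and Corollary 2.1). -/
theorem Pdev_of_idempotent_eq_zero {R A : Type*} [CommRing R] [AddCommGroup A] [Module R A]
    (mul brk : A →ₗ[R] A →ₗ[R] A)
    (hcomm : ∀ x y : A, mul x y = mul y x)
    (hassoc : ∀ x y z : A, mul (mul x y) z = mul x (mul y z))
    (halt : ∀ x : A, brk x x = 0)
    (hjac : ∀ x y z : A, brk x (brk y z) + brk y (brk z x) + brk z (brk x y) = 0)
    (hF : ∀ x y z w : A,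
      Pdev mul brk (mul x y) z w = mul x (Pdev mul brk y z w) + mul y (Pdev mul brk x z w))
    (u : A) (hu : mul u u = u) :
    ∀ Z W : A, Pdev mul brk u Z W = 0 :=
  Pdev_of_idempotent_eq_zero_general mul brk (fun x y ↦ hassoc x x y) hF u hu
end

section
/- Let (A, ∘, [·,·]) be an F-algebra over a commutative ring R, and let u, v ∈ A be orthogonal ∘-idempotents: u∘u = u, v∘v = v, and u∘v = 0. Then [u,v] = 0. (This is the forward direction of Corollary 2.1: on a semisimple F-manifold the basic idempotent vector fields e_i pairwise commute, which yields Dubrovin's canonical coordinates.) -/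
theorem eq_zero_of_eq_map_add_map {F A : Type*} [AddLeftCancelMonoid A] [FunLike F A A]
    [AddMonoidHomClass F A A] (f : F) {x : A} (hf : f (f x) = f x) (hx : x = f x + f x) :
    x = 0 := by
  have hfx : f x = 0 := by
    have h : f x + f x = f x := by
      calc f x + f x = f (f x + f x) := by rw [map_add, hf]
        _ = f x := by rw [← hx]
    exact add_eq_left.mp h
  rw [hx, hfx, add_zero]

section Bilinear

variable {R A : Type*} [CommRing R] [AddCommGroup A] [Module R A] {mul brk : A →ₗ[R] A →ₗ[R] A}

theorem eq_zero_of_eq_idempotent_mul_add_self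
    (hassoc : ∀ x y z : A, mul (mul x y) z = mul x (mul y z))
    {e x : A} (he : mul e e = e) (hx : x = mul e x + mul e x) : x = 0 :=
  eq_zero_of_eq_map_add_map (mul e) (by rw [← hassoc, he]) hx

theorem leibniz_map_idempotent_eq_zero
    (hcomm : ∀ x y : A, mul x y = mul y x)
    (hassoc : ∀ x y z : A, mul (mul x y) z = mul x (mul y z))
    {D : A → A} (hD : ∀ z w : A, D (mul z w) = mul (D z) w + mul z (D w))
    {e : A} (he : mul e e = e) : D e = 0 := by
  refine eq_zero_of_eq_idempotent_mul_add_self hassoc he ?_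
  calc D e = D (mul e e) := by rw [he]
    _ = mul (D e) e + mul e (D e) := hD e e
    _ = mul e (D e) + mul e (D e) := by rw [hcomm (D e) e]

theorem Pdev_eq_zero_iff {x z w : A} :
    Pdev mul brk x z w = 0 ↔ brk x (mul z w) = mul (brk x z) w + mul z (brk x w) := by
  rw [Pdev, sub_sub, sub_eq_zero]

theorem Pdev_idempotent_eq_zero
    (hassoc : ∀ x y z : A, mul (mul x y) z = mul x (mul y z))
    (hF : ∀ x y z w : A,
      Pdev mul brk (mul x y) z w = mul x (Pdev mul brk y z w) + mul y (Pdev mul brk x z w))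
    {e : A} (he : mul e e = e) (z w : A) : Pdev mul brk e z w = 0 := by
  refine eq_zero_of_eq_idempotent_mul_add_self hassoc he ?_
  calc Pdev mul brk e z w = Pdev mul brk (mul e e) z w := by rw [he]
    _ = mul e (Pdev mul brk e z w) + mul e (Pdev mul brk e z w) := hF e e z w

end Bilinear

theorem orthogonal_idempotents_commute_general {R A : Type*} [CommRing R] [AddCommGroup A]
    [Module R A] (mul brk : A →ₗ[R] A →ₗ[R] A)
    (hcomm : ∀ x y : A, mul x y = mul y x)
    (hassoc : ∀ x y z : A, mul (mul x y) z = mul x (mul y z))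
    (hF : ∀ x y z w : A,
      Pdev mul brk (mul x y) z w = mul x (Pdev mul brk y z w) + mul y (Pdev mul brk x z w))
    (u v : A) (hu : mul u u = u) (hv : mul v v = v) :
    brk u v = 0 := by
  have hleibniz (z w : A) : brk u (mul z w) = mul (brk u z) w + mul z (brk u w) :=
    Pdev_eq_zero_iff.mp (Pdev_idempotent_eq_zero hassoc hF hu z w)
  exact leibniz_map_idempotent_eq_zero hcomm hassoc hleibniz hv

/-- Corollary 2.1 (forward direction): in an F-algebra, orthogonal ∘-idempotents
commute, `[u,v] = 0`. -/
theorem orthogonal_idempotents_commute {R A : Type*} [CommRing R] [AddCommGroup A] [Module R A]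
    (mul brk : A →ₗ[R] A →ₗ[R] A)
    (hcomm : ∀ x y : A, mul x y = mul y x)
    (hassoc : ∀ x y z : A, mul (mul x y) z = mul x (mul y z))
    (halt : ∀ x : A, brk x x = 0)
    (hjac : ∀ x y z : A, brk x (brk y z) + brk y (brk z x) + brk z (brk x y) = 0)
    (hF : ∀ x y z w : A,
      Pdev mul brk (mul x y) z w = mul x (Pdev mul brk y z w) + mul y (Pdev mul brk x z w))
    (u v : A) (hu : mul u u = u) (hv : mul v v = v) (huv : mul u v = 0) :
    brk u v = 0 :=
  orthogonal_idempotents_commute_general mul brk hcomm hassoc hF u v hu hv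
end

section
/- Let (A, ∘, [·,·]) be an F-algebra over a commutative ring R with identity element e for ∘, and let X ∈ A. Then for every natural number n ≥ 1 identity (18) holds: [X^{∘n}, e] = n • (X^{∘(n−1)} ∘ [X, e]), where X^{∘k} denotes the k-th ∘-power of X and X^{∘0} := e. -/
/-- The Leibniz rule `D (x ∘ y) = x ∘ D y + y ∘ D x`, through which the F-identity enters the power
rule. Both products act from the left, as for left derivations of noncommutative rings, and `D` is
not assumed to be additive. -/
def LeftLeibniz {R A : Type*} [CommSemiring R] [AddCommMonoid A] [Module R A]
    (mul : A →ₗ[R] A →ₗ[R] A) (D : A → A) : Prop :=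
  ∀ x y : A, D (mul x y) = mul x (D y) + mul y (D x)

theorem LeftLeibniz.pow_succ {R A : Type*} [CommSemiring R] [AddCommMonoid A] [Module R A]
    {mul : A →ₗ[R] A →ₗ[R] A} {D : A → A} (hD : LeftLeibniz mul D)
    (hassoc : ∀ x y z : A, mul (mul x y) z = mul x (mul y z))
    {e : A} (he_left : ∀ x : A, mul e x = x) (he_right : ∀ x : A, mul x e = x)
    {X : A} {pow : ℕ → A} (hpow0 : pow 0 = e) (hpowS : ∀ k : ℕ, pow (k + 1) = mul X (pow k))
    (k : ℕ) : D (pow (k + 1)) = (k + 1) • mul (pow k) (D X) := by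
  induction k with
  | zero => rw [hpowS, hpow0, he_right, he_left, zero_add, one_nsmul]
  | succ k ih =>
    calc D (pow (k + 1 + 1))
        = mul X (D (pow (k + 1))) + mul (pow (k + 1)) (D X) := by rw [hpowS (k + 1), hD]
      _ = (k + 1) • mul X (mul (pow k) (D X)) + mul (pow (k + 1)) (D X) := by
        rw [ih, map_nsmul]
      _ = (k + 1) • mul (pow (k + 1)) (D X) + mul (pow (k + 1)) (D X) := by
        rw [← hassoc, ← hpowS]
      _ = (k + 1 + 1) • mul (pow (k + 1)) (D X) := (succ_nsmul _ _).symm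

section Bracket

variable {R A : Type*} [CommRing R] [AddCommGroup A] [Module R A]

theorem Pdev_unit_unit (mul brk : A →ₗ[R] A →ₗ[R] A) {e : A} (he_left : ∀ x : A, mul e x = x)
    (he_right : ∀ x : A, mul x e = x) (x : A) : Pdev mul brk x e e = -brk x e := by
  rw [Pdev, he_right, he_right, he_left, sub_self, zero_sub]

theorem leftLeibniz_bracket_unit_iff (mul brk : A →ₗ[R] A →ₗ[R] A) {e : A}
    (he_left : ∀ x : A, mul e x = x) (he_right : ∀ x : A, mul x e = x) :
    LeftLeibniz mul (fun x => brk x e) ↔ ∀ x y : A,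
      Pdev mul brk (mul x y) e e = mul x (Pdev mul brk y e e) + mul y (Pdev mul brk x e e) := by
  simp only [LeftLeibniz, Pdev_unit_unit mul brk he_left he_right, map_neg, ← neg_add, neg_inj]

theorem bracket_pow_identity_general (mul brk : A →ₗ[R] A →ₗ[R] A)
    (hassoc : ∀ x y z : A, mul (mul x y) z = mul x (mul y z))
    (e : A) (he_left : ∀ x : A, mul e x = x) (he_right : ∀ x : A, mul x e = x)
    (hF : ∀ x y : A,
      Pdev mul brk (mul x y) e e = mul x (Pdev mul brk y e e) + mul y (Pdev mul brk x e e))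
    (X : A) (pow : ℕ → A) (hpow0 : pow 0 = e)
    (hpowS : ∀ k : ℕ, pow (k + 1) = mul X (pow k)) :
    ∀ n : ℕ, 1 ≤ n → brk (pow n) e = n • mul (pow (n - 1)) (brk X e) := by
  have hD : LeftLeibniz mul (fun x => brk x e) :=
    (leftLeibniz_bracket_unit_iff mul brk he_left he_right).mpr hF
  intro n hn
  obtain ⟨k, rfl⟩ := Nat.exists_eq_add_of_le' hn
  exact hD.pow_succ hassoc he_left he_right hpow0 hpowS k

end Bracket

/-- Identity (18): in an F-algebra with identity `e`,
`[X^{∘n}, e] = n • (X^{∘(n−1)} ∘ [X, e])` for `n ≥ 1`. -/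
theorem bracket_pow_identity {R A : Type*} [CommRing R] [AddCommGroup A] [Module R A]
    (mul brk : A →ₗ[R] A →ₗ[R] A)
    (hcomm : ∀ x y : A, mul x y = mul y x)
    (hassoc : ∀ x y z : A, mul (mul x y) z = mul x (mul y z))
    (halt : ∀ x : A, brk x x = 0)
    (hjac : ∀ x y z : A, brk x (brk y z) + brk y (brk z x) + brk z (brk x y) = 0)
    (hF : ∀ x y z w : A,
      Pdev mul brk (mul x y) z w = mul x (Pdev mul brk y z w) + mul y (Pdev mul brk x z w))
    (e : A) (he : ∀ x : A, mul e x = x)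
    (X : A) (pow : ℕ → A) (hpow0 : pow 0 = e)
    (hpowS : ∀ k : ℕ, pow (k + 1) = mul X (pow k)) :
    ∀ n : ℕ, 1 ≤ n → brk (pow n) e = n • mul (pow (n - 1)) (brk X e) :=
  bracket_pow_identity_general mul brk hassoc e he (fun x => (hcomm x e).trans (he x))
    (fun x y => hF x y e e) X pow hpow0 hpowS
end

section
/- Let A be a module over a commutative ring R equipped with an R-bilinear commutative and associative multiplication ∘ : A × A → A and an R-bilinear, alternating bracket [·,·] : A × A → A. Let d0 ∈ R and let E ∈ A satisfy P_E(Z,W) = d0 • (Z∘W) for all Z, W ∈ A. Then for every natural number n ≥ 1: [E^{∘n}, E] = (1 − (n : ℤ)) • (d0 • E^{∘n}), where E^{∘k} denotes the k-th ∘-power of E. (This verifies that an Euler field satisfies identity (19), the key step in the proof of Theorem 6.) -/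
/-!
Where `P_X(Z,W) = d • (Z∘W)`, the operator `[X, ·]` is a derivation up to the shift `d`:
eigenvectors `Z`, `W` of eigenvalues `a`, `b` have a product of eigenvalue `a + b + d`. Hence
`Z^{∘n}` has eigenvalue `n a + (n - 1) d`. An Euler field `E` has eigenvalue `0` for `[E, ·]`, so
its powers have eigenvalues `(n - 1) d0`, and antisymmetry reverses the sign.
-/

section

variable {R A : Type*} [CommRing R] [AddCommGroup A] [Module R A] {mul brk : A →ₗ[R] A →ₗ[R] A}

theorem brk_mul_eq_add_pdev (X Z W : A) :
    brk X (mul Z W) = mul (brk X Z) W + mul Z (brk X W) + Pdev mul brk X Z W := by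
  rw [Pdev]
  abel

theorem brk_mul_eq_smul_of_pdev_eq_smul {X Z W : A} {a b d : R}
    (hP : Pdev mul brk X Z W = d • mul Z W) (hZ : brk X Z = a • Z) (hW : brk X W = b • W) :
    brk X (mul Z W) = (a + b + d) • mul Z W := by
  rw [brk_mul_eq_add_pdev, hP, hZ, hW, map_smul, map_smul, LinearMap.smul_apply, add_smul, add_smul]

theorem brk_pow_eq_smul_of_pdev_eq_smul {X Z : A} {a d : R}
    (hP : ∀ W, Pdev mul brk X Z W = d • mul Z W) (hZ : brk X Z = a • Z) {pow : ℕ → A}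
    (hpow_one : pow 1 = Z) (hpow_succ : ∀ k, 1 ≤ k → pow (k + 1) = mul Z (pow k))
    {n : ℕ} (hn : 1 ≤ n) : brk X (pow n) = (n * a + (n - 1) * d) • pow n := by
  induction n, hn using Nat.le_induction with
  | base => simpa [hpow_one] using hZ
  | succ k hk ih =>
    have eigenvalue_succ :
        a + (k * a + (k - 1) * d) + d = (k + 1 : ℕ) * a + ((k + 1 : ℕ) - 1) * d := by
      push_cast
      ring
    rw [hpow_succ k hk, brk_mul_eq_smul_of_pdev_eq_smul (hP _) hZ ih, eigenvalue_succ]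

theorem euler_field_identity19_general (halt : brk.IsAlt) {d0 : R} {E : A}
    (hE : ∀ W, Pdev mul brk E E W = d0 • mul E W) {pow : ℕ → A} (hpow_one : pow 1 = E)
    (hpow_succ : ∀ k, 1 ≤ k → pow (k + 1) = mul E (pow k)) {n : ℕ} (hn : 1 ≤ n) :
    brk (pow n) E = (1 - (n : ℤ)) • (d0 • pow n) := by
  have brk_self : brk E E = (0 : R) • E := by rw [halt.self_eq_zero, zero_smul]
  calc
    brk (pow n) E = -brk E (pow n) := (halt.neg E (pow n)).symm
    _ = -((n * 0 + (n - 1) * d0) • pow n) := by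
      rw [brk_pow_eq_smul_of_pdev_eq_smul hE brk_self hpow_one hpow_succ hn]
    _ = (1 - (n : ℤ)) • (d0 • pow n) := by module

end

/-- An Euler field `E` of weight `d0` satisfies identity (19):
`[E^{∘n}, E] = (1 − n) • (d0 • E^{∘n})` for all `n ≥ 1`. -/
theorem euler_field_identity19 {R A : Type*} [CommRing R] [AddCommGroup A] [Module R A]
    (mul brk : A →ₗ[R] A →ₗ[R] A)
    (hcomm : ∀ x y : A, mul x y = mul y x)
    (hassoc : ∀ x y z : A, mul (mul x y) z = mul x (mul y z))
    (halt : ∀ x : A, brk x x = 0)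
    (d0 : R) (E : A)
    (hE : ∀ Z W : A, Pdev mul brk E Z W = d0 • mul Z W)
    (pow : ℕ → A) (hpow1 : pow 1 = E)
    (hpowS : ∀ k : ℕ, 1 ≤ k → pow (k + 1) = mul E (pow k)) :
    ∀ n : ℕ, 1 ≤ n → brk (pow n) E = (1 - (n : ℤ)) • (d0 • pow n) := by
  intro n hn
  exact euler_field_identity19_general halt (hE E) hpow1 hpowS hn
end
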